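/- Suppose (m,p), (m̃,p̃) are KHK-related for the first Clebsch flow, and (m̃,p̃), (m̿,p̿) are also KHK-related. Assume c0(p) ≠ 0, c0(p̃) ≠ 0, C0(p,p̃) ≠ 0 and C0(p̃,p̿) ≠ 0, where c0(p) = p1²+p2²+p3² and C0(p,p̃) = p1p̃1+p2p̃2+p3p̃3. Then the function K(m,p) = ∑_{i=1}^{3} (Cᵢ(p,p̃)/C0(p,p̃))·(mᵢpᵢ/c0(p)) is an integral of motion: ∑_{i=1}^{3} (Cᵢ(p,p̃)/C0(p,p̃))·(mᵢpᵢ/c0(p)) = ∑_{i=1}^{3} (Cᵢ(p̃,p̿)/C0(p̃,p̿))·(m̃ᵢp̃ᵢ/c0(p̃)). -/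

import Mathlib

/-- `(m,p)` and `(n,q)` are KHK-related for the first Clebsch flow. -/
def Clebsch1KHK (ε ω1 ω2 ω3 m1 m2 m3 p1 p2 p3 n1 n2 n3 q1 q2 q3 : ℝ) : Prop :=
  n1 - m1 = ε * (ω3 - ω2) * (q2 * p3 + p2 * q3) ∧
  n2 - m2 = ε * (ω1 - ω3) * (q3 * p1 + p3 * q1) ∧
  n3 - m3 = ε * (ω2 - ω1) * (q1 * p2 + p1 * q2) ∧
  q1 - p1 = ε * (n3 * p2 + m3 * q2) - ε * (n2 * p3 + m2 * q3) ∧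
  q2 - p2 = ε * (n1 * p3 + m1 * q3) - ε * (n3 * p1 + m3 * q1) ∧
  q3 - p3 = ε * (n2 * p1 + m2 * q1) - ε * (n1 * p2 + m1 * q2)

def C1 (ε ω1 ω2 ω3 p1 p2 p3 q1 q2 q3 : ℝ) : ℝ :=
  1 + ε ^ 2 * (ω2 - ω1) * p2 * q2 + ε ^ 2 * (ω3 - ω1) * p3 * q3
def C2 (ε ω1 ω2 ω3 p1 p2 p3 q1 q2 q3 : ℝ) : ℝ :=
  1 + ε ^ 2 * (ω1 - ω2) * p1 * q1 + ε ^ 2 * (ω3 - ω2) * p3 * q3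
def C3 (ε ω1 ω2 ω3 p1 p2 p3 q1 q2 q3 : ℝ) : ℝ :=
  1 + ε ^ 2 * (ω1 - ω3) * p1 * q1 + ε ^ 2 * (ω2 - ω3) * p2 * q2

def C0 (p1 p2 p3 q1 q2 q3 : ℝ) : ℝ := p1 * q1 + p2 * q2 + p3 * q3
def c0 (p1 p2 p3 : ℝ) : ℝ := p1 ^ 2 + p2 ^ 2 + p3 ^ 2

/-!
Without coordinates, with `Ω = diag(ω₁, ω₂, ω₃)`, a step `(m, p) ↦ (n, q)` reads
`n - m = ε w` and `q - p = ε (p × n + q × m)`, where `w = p × Ωq + q × Ωp`, and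
`diag(C₁, C₂, C₃)` is the matrix `S = (1 + ε² p·Ωq) - ε² (p·q) Ω`, so that
`K = m·Sp / ((p·q) (p·p))`. Two facts make `K` an integral.

* Expanding `q - p` and `v - q` at the common momentum `n` of two consecutive steps
  `(m, p) ↦ (n, q) ↦ (u, v)`, pairing them with `q + v` and `p + q` and adding cancels `n`: the
  ratio `(1 + ε² p·Ωq) / (p·q)`, and hence `S / (p·q)`, is the same for both steps.
* Within a step, `m·Sp / (p·p) = n·Sq / (q·q)`. The step determines `(p + q) × (m + n)`, that is,
  `m + n` up to a multiple of `p + q`; the undetermined multiple is harmless because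
  `(q·q) Sp - (p·p) Sq` is orthogonal to `p + q`, which amounts to conservation of
  `p·p / (1 - ε² p·Ωp)`.
-/

open Matrix

section CommRing

variable {R : Type*} [CommRing R] {ε : R} {Ω : Matrix (Fin 3) (Fin 3) R}
  {m p n q u v : Fin 3 → R}

lemma dotProduct_mulVec_comm_of_isSymm {ι : Type*} [Fintype ι] {A : Matrix ι ι R} (hA : A.IsSymm)
    (x y : ι → R) : x ⬝ᵥ A *ᵥ y = y ⬝ᵥ A *ᵥ x := by
  rw [dotProduct_mulVec, ← mulVec_transpose, hA.eq, dotProduct_comm]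

/-- The polarization of the quadratic right-hand side `m' = 2 p × Ω p` of the first Clebsch flow:
the torque exerted on the momentum. -/
def torque (Ω : Matrix (Fin 3) (Fin 3) R) (p q : Fin 3 → R) : Fin 3 → R :=
  p ⨯₃ (Ω *ᵥ q) + q ⨯₃ (Ω *ᵥ p)

lemma torque_comm (Ω : Matrix (Fin 3) (Fin 3) R) (p q : Fin 3 → R) :
    torque Ω p q = torque Ω q p :=
  add_comm _ _

lemma dotProduct_torque_left (Ω : Matrix (Fin 3) (Fin 3) R) (p q : Fin 3 → R) :
    p ⬝ᵥ torque Ω p q = p ⨯₃ q ⬝ᵥ Ω *ᵥ p := by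
  rw [torque, dotProduct_add, dot_self_cross, zero_add, ← triple_product_permutation,
    dotProduct_comm]

lemma dotProduct_torque_right (Ω : Matrix (Fin 3) (Fin 3) R) (p q : Fin 3 → R) :
    q ⬝ᵥ torque Ω p q = -(p ⨯₃ q ⬝ᵥ Ω *ᵥ q) := by
  rw [torque_comm, dotProduct_torque_left, ← cross_anticomm, neg_dotProduct]

lemma cross_torque_left (Ω : Matrix (Fin 3) (Fin 3) R) (p q : Fin 3 → R) :
    p ⨯₃ torque Ω p q = (p ⬝ᵥ Ω *ᵥ q) • p + (p ⬝ᵥ Ω *ᵥ p) • q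
      - (p ⬝ᵥ p) • (Ω *ᵥ q) - (p ⬝ᵥ q) • (Ω *ᵥ p) := by
  rw [torque, map_add, cross_cross_eq_smul_sub_smul', cross_cross_eq_smul_sub_smul',
    dotProduct_comm q p]
  abel

lemma torque_dotProduct_mulVec_left (Ω : Matrix (Fin 3) (Fin 3) R) (p q : Fin 3 → R) :
    (p ⬝ᵥ p) * (torque Ω p q ⬝ᵥ Ω *ᵥ q) + (p ⬝ᵥ q) * (torque Ω p q ⬝ᵥ Ω *ᵥ p) =
      (p ⨯₃ q ⬝ᵥ Ω *ᵥ p) * (p ⬝ᵥ Ω *ᵥ q) - (p ⨯₃ q ⬝ᵥ Ω *ᵥ q) * (p ⬝ᵥ Ω *ᵥ p) := by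
  have h : torque Ω p q ⬝ᵥ p ⨯₃ torque Ω p q = 0 := dot_cross_self _ _
  rw [cross_torque_left] at h
  simp only [dotProduct_sub, dotProduct_add, dotProduct_smul, smul_eq_mul,
    dotProduct_comm (torque Ω p q) p, dotProduct_comm (torque Ω p q) q,
    dotProduct_torque_left, dotProduct_torque_right] at h
  linear_combination -h

lemma torque_dotProduct_mulVec_right (hΩ : Ω.IsSymm) (p q : Fin 3 → R) :
    (q ⬝ᵥ q) * (torque Ω p q ⬝ᵥ Ω *ᵥ p) + (p ⬝ᵥ q) * (torque Ω p q ⬝ᵥ Ω *ᵥ q) =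
      (p ⨯₃ q ⬝ᵥ Ω *ᵥ p) * (q ⬝ᵥ Ω *ᵥ q) - (p ⨯₃ q ⬝ᵥ Ω *ᵥ q) * (p ⬝ᵥ Ω *ᵥ q) := by
  have h := torque_dotProduct_mulVec_left Ω q p
  rw [torque_comm, dotProduct_comm q p, ← cross_anticomm p q,
    dotProduct_mulVec_comm_of_isSymm hΩ q p, neg_dotProduct, neg_dotProduct] at h
  linear_combination h

/-- One step `(m, p) ↦ (n, q)` of the Kahan–Hirota–Kimura discretization of the Clebsch flow
`m' = 2 p × Ω p`, `p' = 2 p × m`, written without coordinates; the first Clebsch flow is the case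
`Ω = diag(ω₁, ω₂, ω₃)`. -/
structure IsKHKStep (ε : R) (Ω : Matrix (Fin 3) (Fin 3) R) (m p n q : Fin 3 → R) : Prop where
  momentum : n - m = ε • torque Ω p q
  position : q - p = ε • (p ⨯₃ n + q ⨯₃ m)

/-- The matrix `S` weighting the pairing of `m` and `p` in `K`; it equals `diag(C₁, C₂, C₃)` when
`Ω = diag(ω₁, ω₂, ω₃)`. -/
def weightMatrix (ε : R) (Ω : Matrix (Fin 3) (Fin 3) R) (p q : Fin 3 → R) :
    Matrix (Fin 3) (Fin 3) R :=
  (1 + ε ^ 2 * (p ⬝ᵥ Ω *ᵥ q)) • 1 - (ε ^ 2 * (p ⬝ᵥ q)) • Ω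

lemma dotProduct_weightMatrix_mulVec (ε : R) (Ω : Matrix (Fin 3) (Fin 3) R) (p q x y : Fin 3 → R) :
    x ⬝ᵥ weightMatrix ε Ω p q *ᵥ y =
      (1 + ε ^ 2 * (p ⬝ᵥ Ω *ᵥ q)) * (x ⬝ᵥ y) - ε ^ 2 * (p ⬝ᵥ q) * (x ⬝ᵥ Ω *ᵥ y) := by
  simp only [weightMatrix, sub_mulVec, smul_mulVec, one_mulVec, dotProduct_sub, dotProduct_smul,
    smul_eq_mul]

namespace IsKHKStep

lemma reverse (h : IsKHKStep ε Ω m p n q) : IsKHKStep (-ε) Ω n q m p where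
  momentum := by rw [← neg_sub, h.momentum, torque_comm, neg_smul]
  position := by rw [← neg_sub, h.position, add_comm, neg_smul]

lemma position_sub_eq (h : IsKHKStep ε Ω m p n q) :
    q - p = ε • ((p + q) ⨯₃ m) + ε ^ 2 • (p ⨯₃ torque Ω p q) := by
  have hn : n = m + ε • torque Ω p q := by rw [← h.momentum, add_sub_cancel]
  rw [h.position, hn]
  simp only [map_add, map_smul, LinearMap.add_apply, smul_add, smul_smul, pow_two]
  abel

lemma dotProduct_self_sub_eq (h : IsKHKStep ε Ω m p n q) (hΩ : Ω.IsSymm) :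
    q ⬝ᵥ q - p ⬝ᵥ p = ε ^ 2 * ((q ⬝ᵥ q) * (p ⬝ᵥ Ω *ᵥ p) - (p ⬝ᵥ p) * (q ⬝ᵥ Ω *ᵥ q)) := by
  calc q ⬝ᵥ q - p ⬝ᵥ p
    _ = (p + q) ⬝ᵥ (q - p) := by
      simp only [add_dotProduct, dotProduct_sub, dotProduct_comm q p]
      ring
    _ = ε ^ 2 * (q ⬝ᵥ p ⨯₃ torque Ω p q) := by
      rw [h.position_sub_eq, dotProduct_add, dotProduct_smul, dot_self_cross, smul_zero, zero_add,
        dotProduct_smul, add_dotProduct, dot_self_cross, zero_add, smul_eq_mul]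
    _ = ε ^ 2 * ((q ⬝ᵥ q) * (p ⬝ᵥ Ω *ᵥ p) - (p ⬝ᵥ p) * (q ⬝ᵥ Ω *ᵥ q)) := by
      rw [cross_torque_left]
      simp only [dotProduct_sub, dotProduct_add, dotProduct_smul, smul_eq_mul,
        dotProduct_comm q p, dotProduct_mulVec_comm_of_isSymm hΩ q p]
      ring

lemma smul_cross_momentum_add (h : IsKHKStep ε Ω m p n q) :
    ε • ((p + q) ⨯₃ (m + n)) = (2 : R) • (q - p) + ε ^ 2 • ((q - p) ⨯₃ torque Ω p q) := by
  have hn : n = m + ε • torque Ω p q := by rw [← h.momentum, add_sub_cancel]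
  nth_rw 1 [h.position]
  rw [hn]
  simp only [map_add, map_sub, map_smul, LinearMap.add_apply, LinearMap.sub_apply]
  module

lemma add_dotProduct_weighted_sub_eq_zero (h : IsKHKStep ε Ω m p n q) (hΩ : Ω.IsSymm) :
    (p + q) ⬝ᵥ ((q ⬝ᵥ q) • (weightMatrix ε Ω p q *ᵥ p)
      - (p ⬝ᵥ p) • (weightMatrix ε Ω p q *ᵥ q)) = 0 := by
  simp only [dotProduct_sub, dotProduct_smul, dotProduct_weightMatrix_mulVec, add_dotProduct,
    smul_eq_mul, dotProduct_comm q p, dotProduct_mulVec_comm_of_isSymm hΩ q p]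
  linear_combination (p ⬝ᵥ q) * h.dotProduct_self_sub_eq hΩ

lemma dotProduct_cross_add_weighted_sub (h : IsKHKStep ε Ω m p n q) (hΩ : Ω.IsSymm) :
    ((2 : R) • (q - p) + ε ^ 2 • ((q - p) ⨯₃ torque Ω p q)) ⬝ᵥ
      ((p + q) ⨯₃ ((q ⬝ᵥ q) • (weightMatrix ε Ω p q *ᵥ p)
        - (p ⬝ᵥ p) • (weightMatrix ε Ω p q *ᵥ q))) =
    ε ^ 2 * ((p + q) ⬝ᵥ (p + q)) * (torque Ω p q ⬝ᵥ
      ((q ⬝ᵥ q) • (weightMatrix ε Ω p q *ᵥ p) + (p ⬝ᵥ p) • (weightMatrix ε Ω p q *ᵥ q))) := by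
  have hcross : (q - p) ⨯₃ (p + q) = (-2 : R) • (p ⨯₃ q) := by
    simp only [map_add, map_sub, LinearMap.sub_apply, cross_self, ← cross_anticomm p q]
    module
  have htriple (x : Fin 3 → R) : (q - p) ⬝ᵥ (p + q) ⨯₃ x = -2 * (p ⨯₃ q ⬝ᵥ x) := by
    rw [triple_product_permutation, triple_product_permutation, hcross, dotProduct_smul,
      smul_eq_mul, dotProduct_comm]
  rw [add_dotProduct, smul_dotProduct, smul_dotProduct, htriple, cross_dot_cross]
  simp only [dotProduct_sub, dotProduct_add, dotProduct_smul, dotProduct_weightMatrix_mulVec,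
    add_dotProduct, sub_dotProduct, smul_eq_mul, dotProduct_comm q p,
    dotProduct_mulVec_comm_of_isSymm hΩ q p, dotProduct_comm (torque Ω p q) p,
    dotProduct_comm (torque Ω p q) q, dotProduct_comm (p ⨯₃ q) p, dotProduct_comm (p ⨯₃ q) q,
    dot_self_cross, dot_cross_self, dotProduct_torque_left, dotProduct_torque_right]
  -- The `torque` identities eliminate `torque Ω p q · Ω p` and `torque Ω p q · Ω q`; what remains
  -- is a multiple of the conservation law.
  linear_combination
    2 * ε ^ 4 * (p ⬝ᵥ q) * ((q ⬝ᵥ q) * torque_dotProduct_mulVec_left Ω p q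
      + (p ⬝ᵥ p) * torque_dotProduct_mulVec_right hΩ p q)
    + ε ^ 2 * (p ⬝ᵥ q) * (p ⨯₃ q ⬝ᵥ Ω *ᵥ p + p ⨯₃ q ⬝ᵥ Ω *ᵥ q) * h.dotProduct_self_sub_eq hΩ

lemma dotProduct_self_mul_exchange [NoZeroDivisors R] [NeZero (2 : R)] (h : IsKHKStep ε Ω m p n q)
    (hΩ : Ω.IsSymm) (hs : (p + q) ⬝ᵥ (p + q) ≠ 0) :
    (q ⬝ᵥ q) * (m ⬝ᵥ weightMatrix ε Ω p q *ᵥ p) = (p ⬝ᵥ p) * (n ⬝ᵥ weightMatrix ε Ω p q *ᵥ q) := by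
  rcases eq_or_ne ε 0 with rfl | hε
  · obtain rfl : n = m := sub_eq_zero.mp (by rw [h.momentum, zero_smul])
    obtain rfl : q = p := sub_eq_zero.mp (by rw [h.position, zero_smul])
    rfl
  set g := (q ⬝ᵥ q) • (weightMatrix ε Ω p q *ᵥ p) - (p ⬝ᵥ p) • (weightMatrix ε Ω p q *ᵥ q) with hg
  set k := (q ⬝ᵥ q) • (weightMatrix ε Ω p q *ᵥ p) + (p ⬝ᵥ p) • (weightMatrix ε Ω p q *ᵥ q) with hk
  have hperp : (p + q) ⬝ᵥ g = 0 := h.add_dotProduct_weighted_sub_eq_zero hΩ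
  have hsum : (m + n) ⬝ᵥ g = (n - m) ⬝ᵥ k := by
    apply mul_left_cancel₀ (mul_ne_zero hε hs)
    calc ε * ((p + q) ⬝ᵥ (p + q)) * ((m + n) ⬝ᵥ g)
      _ = (ε • ((p + q) ⨯₃ (m + n))) ⬝ᵥ ((p + q) ⨯₃ g) := by
        rw [smul_dotProduct, cross_dot_cross, hperp, smul_eq_mul]
        ring
      _ = ε ^ 2 * ((p + q) ⬝ᵥ (p + q)) * (torque Ω p q ⬝ᵥ k) := by
        rw [h.smul_cross_momentum_add, h.dotProduct_cross_add_weighted_sub hΩ]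
      _ = ε * ((p + q) ⬝ᵥ (p + q)) * ((n - m) ⬝ᵥ k) := by
        rw [h.momentum, smul_dotProduct, smul_eq_mul]
        ring
  apply mul_left_cancel₀ (two_ne_zero (α := R))
  simp only [hg, hk, dotProduct_add, dotProduct_sub, add_dotProduct, sub_dotProduct,
    dotProduct_smul, smul_eq_mul] at hsum
  linear_combination hsum

lemma dotProduct_mul_one_add [NoZeroDivisors R] [NeZero (2 : R)] (h : IsKHKStep ε Ω m p n q)
    (h' : IsKHKStep ε Ω n q u v) (hΩ : Ω.IsSymm) :
    (q ⬝ᵥ v) * (1 + ε ^ 2 * (p ⬝ᵥ Ω *ᵥ q)) = (p ⬝ᵥ q) * (1 + ε ^ 2 * (q ⬝ᵥ Ω *ᵥ v)) := by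
  have hp : (q + v) ⬝ᵥ (p - q) = _ := congrArg ((q + v) ⬝ᵥ ·) h.reverse.position_sub_eq
  have hv : (p + q) ⬝ᵥ (v - q) = _ := congrArg ((p + q) ⬝ᵥ ·) h'.position_sub_eq
  have hn : (q + v) ⬝ᵥ (q + p) ⨯₃ n + (p + q) ⬝ᵥ (q + v) ⨯₃ n = 0 := by
    rw [add_comm p q, triple_product_permutation, ← cross_anticomm, dotProduct_neg]
    exact neg_add_cancel _
  apply mul_left_cancel₀ (two_ne_zero (α := R))
  simp only [cross_torque_left, dotProduct_add, dotProduct_sub, dotProduct_smul,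
    smul_eq_mul] at hp hv
  simp only [add_dotProduct, dotProduct_comm q p, dotProduct_comm v q, dotProduct_comm v p,
    dotProduct_mulVec_comm_of_isSymm hΩ q p, dotProduct_mulVec_comm_of_isSymm hΩ v p,
    dotProduct_mulVec_comm_of_isSymm hΩ v q] at hp hv hn
  linear_combination hv - hp + ε * hn

lemma smul_weightMatrix [NoZeroDivisors R] [NeZero (2 : R)] (h : IsKHKStep ε Ω m p n q)
    (h' : IsKHKStep ε Ω n q u v) (hΩ : Ω.IsSymm) :
    (q ⬝ᵥ v) • weightMatrix ε Ω p q = (p ⬝ᵥ q) • weightMatrix ε Ω q v := by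
  simp only [weightMatrix, smul_sub, smul_smul, h.dotProduct_mul_one_add h' hΩ]
  congr 2
  ring

end IsKHKStep

end CommRing

section OrderedField

variable {K : Type*} [Field K] {ε : K} {Ω : Matrix (Fin 3) (Fin 3) K} {m p n q u v : Fin 3 → K}

/-- The function `K(m, p) = ∑ᵢ (Cᵢ / C₀) (mᵢ pᵢ / c₀)`, in terms of a point `(m, p)` and the
position `q` of its image. -/
def discreteIntegral (ε : K) (Ω : Matrix (Fin 3) (Fin 3) K) (m p q : Fin 3 → K) : K :=
  (m ⬝ᵥ weightMatrix ε Ω p q *ᵥ p) / ((p ⬝ᵥ q) * (p ⬝ᵥ p))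

variable [LinearOrder K] [IsStrictOrderedRing K]

lemma IsKHKStep.dotProduct_self_add_ne_zero (h : IsKHKStep ε Ω m p n q) (hp : p ≠ 0) :
    (p + q) ⬝ᵥ (p + q) ≠ 0 := by
  rw [Ne, dotProduct_self_eq_zero]
  intro hs
  obtain rfl : q = -p := (neg_eq_of_add_eq_zero_right hs).symm
  have hpos := congrArg (p ⬝ᵥ ·) h.position
  simp only [map_neg, LinearMap.neg_apply, dotProduct_sub, dotProduct_neg, dotProduct_smul,
    dotProduct_add, dot_self_cross, neg_zero, add_zero, smul_zero] at hpos
  exact hp (dotProduct_self_eq_zero.mp (by linarith))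

theorem clebsch1_K_integral_general (hΩ : Ω.IsSymm) (h : IsKHKStep ε Ω m p n q)
    (h' : IsKHKStep ε Ω n q u v) (hpq : p ⬝ᵥ q ≠ 0) (hqv : q ⬝ᵥ v ≠ 0) :
    discreteIntegral ε Ω m p q = discreteIntegral ε Ω n q v := by
  have hp : p ≠ 0 := by rintro rfl; exact hpq (zero_dotProduct q)
  have hq : q ≠ 0 := by rintro rfl; exact hpq (dotProduct_zero p)
  have hpp : p ⬝ᵥ p ≠ 0 := dotProduct_self_eq_zero.not.mpr hp
  have hqq : q ⬝ᵥ q ≠ 0 := dotProduct_self_eq_zero.not.mpr hq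
  have hexchange := h.dotProduct_self_mul_exchange hΩ (h.dotProduct_self_add_ne_zero hp)
  have hweight := congrArg (n ⬝ᵥ · *ᵥ q) (h.smul_weightMatrix h' hΩ)
  simp only [smul_mulVec, dotProduct_smul, smul_eq_mul] at hweight
  rw [discreteIntegral, discreteIntegral,
    div_eq_div_iff (mul_ne_zero hpq hpp) (mul_ne_zero hqv hqq)]
  linear_combination (q ⬝ᵥ v) * hexchange + (p ⬝ᵥ p) * hweight

end OrderedField

section Coordinates

variable {ε ω1 ω2 ω3 m1 m2 m3 p1 p2 p3 n1 n2 n3 q1 q2 q3 : ℝ}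

lemma Clebsch1KHK.isKHKStep
    (h : Clebsch1KHK ε ω1 ω2 ω3 m1 m2 m3 p1 p2 p3 n1 n2 n3 q1 q2 q3) :
    IsKHKStep ε (diagonal ![ω1, ω2, ω3]) ![m1, m2, m3] ![p1, p2, p3] ![n1, n2, n3]
      ![q1, q2, q3] := by
  obtain ⟨hm1, hm2, hm3, hp1, hp2, hp3⟩ := h
  constructor <;> ext i <;> fin_cases i <;>
    simp [torque, cross_apply, mulVec_diagonal] <;> grind

lemma weightMatrix_diagonal :
    weightMatrix ε (diagonal ![ω1, ω2, ω3]) ![p1, p2, p3] ![q1, q2, q3] =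
      diagonal ![C1 ε ω1 ω2 ω3 p1 p2 p3 q1 q2 q3, C2 ε ω1 ω2 ω3 p1 p2 p3 q1 q2 q3,
        C3 ε ω1 ω2 ω3 p1 p2 p3 q1 q2 q3] := by
  rw [weightMatrix, ← diagonal_one, ← diagonal_smul, ← diagonal_smul, diagonal_sub,
    diagonal_eq_diagonal_iff]
  simp only [vec3_dotProduct, mulVec_diagonal, cons_val]
  intro i
  fin_cases i <;> simp [C1, C2, C3] <;> ring

lemma discreteIntegral_diagonal :
    discreteIntegral ε (diagonal ![ω1, ω2, ω3]) ![m1, m2, m3] ![p1, p2, p3] ![q1, q2, q3] =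
      (C1 ε ω1 ω2 ω3 p1 p2 p3 q1 q2 q3 / C0 p1 p2 p3 q1 q2 q3) * (m1 * p1 / c0 p1 p2 p3)
      + (C2 ε ω1 ω2 ω3 p1 p2 p3 q1 q2 q3 / C0 p1 p2 p3 q1 q2 q3) * (m2 * p2 / c0 p1 p2 p3)
      + (C3 ε ω1 ω2 ω3 p1 p2 p3 q1 q2 q3 / C0 p1 p2 p3 q1 q2 q3) * (m3 * p3 / c0 p1 p2 p3) := by
  have hC0 : ![p1, p2, p3] ⬝ᵥ ![q1, q2, q3] = C0 p1 p2 p3 q1 q2 q3 := vec3_dotProduct'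
  have hc0 : ![p1, p2, p3] ⬝ᵥ ![p1, p2, p3] = c0 p1 p2 p3 := by
    rw [vec3_dotProduct', c0, sq, sq, sq]
  rw [discreteIntegral, weightMatrix_diagonal, hC0, hc0, vec3_dotProduct]
  simp only [mulVec_diagonal, cons_val]
  ring

end Coordinates

/-- Corollary 1: `K(m,p) = ∑ (Cᵢ/C₀)(mᵢpᵢ/c₀)` is an integral of motion of the KHK
discretization of the first Clebsch flow. -/
theorem clebsch1_K_integral
    (ε ω1 ω2 ω3 m1 m2 m3 p1 p2 p3 n1 n2 n3 q1 q2 q3 u1 u2 u3 v1 v2 v3 : ℝ)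
    (hK1 : Clebsch1KHK ε ω1 ω2 ω3 m1 m2 m3 p1 p2 p3 n1 n2 n3 q1 q2 q3)
    (hK2 : Clebsch1KHK ε ω1 ω2 ω3 n1 n2 n3 q1 q2 q3 u1 u2 u3 v1 v2 v3)
    (hc0 : c0 p1 p2 p3 ≠ 0) (hc0' : c0 q1 q2 q3 ≠ 0)
    (hC0 : C0 p1 p2 p3 q1 q2 q3 ≠ 0) (hC0' : C0 q1 q2 q3 v1 v2 v3 ≠ 0) :
    (C1 ε ω1 ω2 ω3 p1 p2 p3 q1 q2 q3 / C0 p1 p2 p3 q1 q2 q3) * (m1 * p1 / c0 p1 p2 p3)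
    + (C2 ε ω1 ω2 ω3 p1 p2 p3 q1 q2 q3 / C0 p1 p2 p3 q1 q2 q3) * (m2 * p2 / c0 p1 p2 p3)
    + (C3 ε ω1 ω2 ω3 p1 p2 p3 q1 q2 q3 / C0 p1 p2 p3 q1 q2 q3) * (m3 * p3 / c0 p1 p2 p3)
    = (C1 ε ω1 ω2 ω3 q1 q2 q3 v1 v2 v3 / C0 q1 q2 q3 v1 v2 v3) * (n1 * q1 / c0 q1 q2 q3)
    + (C2 ε ω1 ω2 ω3 q1 q2 q3 v1 v2 v3 / C0 q1 q2 q3 v1 v2 v3) * (n2 * q2 / c0 q1 q2 q3)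
    + (C3 ε ω1 ω2 ω3 q1 q2 q3 v1 v2 v3 / C0 q1 q2 q3 v1 v2 v3) * (n3 * q3 / c0 q1 q2 q3) := by
  simpa only [discreteIntegral_diagonal] using clebsch1_K_integral_general (isSymm_diagonal _)
    hK1.isKHKStep hK2.isKHKStep (vec3_dotProduct'.trans_ne hC0) (vec3_dotProduct'.trans_ne hC0')
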